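/- arXiv:2202.01694 — 2 statements merged into one kernel-verified Lean document; each statement's English description precedes it below -/
import Mathlib

section
/- Let α and β be standard Borel measurable spaces, let μ₁ and ν₁ be probability measures on α, let μ₂ be a probability measure on β, and let η be a Markov kernel from α to β. Then KL(μ₁.prod μ₂ ‖ ν₁ ⊗ₘ η) = KL(μ₁ ‖ ν₁) + ∫ KL(μ₂ ‖ η x) dμ₁(x), where μ₁.prod μ₂ is the independent product measure on α × β and the sum and integral are taken in the extended reals. -/
open Classical MeasureTheory ProbabilityTheory
open scoped ENNReal

/-- The Kullback–Leibler divergence between two measures, with values in the extended reals: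
`KL(μ‖ν) = ∫ log (dμ/dν) dμ` if `μ ≪ ν` and the log-likelihood ratio is integrable,
and `+∞` otherwise. -/
noncomputable def klDiv {α : Type*} [MeasurableSpace α] (μ ν : Measure α) : EReal :=
  if μ ≪ ν ∧ Integrable (llr μ ν) μ then ((∫ x, llr μ ν x ∂μ : ℝ) : EReal) else ⊤

/-- The canonical conversion of an extended real to an extended nonnegative real
(negative values are sent to `0`).  Used to integrate `EReal`-valued nonnegative
quantities, such as KL divergences between probability measures. -/
noncomputable def erealToENNReal (x : EReal) : ℝ≥0∞ :=
  if x = ⊤ then ⊤ else ENNReal.ofReal x.toReal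

/-!
The chain rule of Mathlib leaves the conditional term as the divergence of `μ ⊗ₘ κ` from `μ ⊗ₘ η`.
Fibrewise Lebesgue decomposition shows that the density of `μ ⊗ₘ κ` with respect to `μ ⊗ₘ η` is the
kernel density `(x, y) ↦ dκₓ/dηₓ (y)`. Writing the divergence as the integral of the nonnegative
function `t log t + 1 - t` of the density, Tonelli's theorem turns that term into the average of
the fibre divergences; if `κₓ ≪ ηₓ` fails on a set of positive measure, both are infinite.
-/

open MeasurableSpace (CountableOrCountablyGenerated)
open InformationTheory (klFun)

section ExtendedReal

lemma erealToENNReal_coe (x : ℝ≥0∞) : erealToENNReal (x : EReal) = x := by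
  have h_eq : erealToENNReal (x : EReal) = (x : EReal).toENNReal := by
    simp only [erealToENNReal, EReal.toENNReal]
  rw [h_eq, EReal.toENNReal_coe]

variable {α : Type*} [MeasurableSpace α] (μ ν : Measure α)

lemma klDiv_eq_coe_sub_measureReal_univ [IsFiniteMeasure μ] [IsFiniteMeasure ν] :
    klDiv μ ν = (InformationTheory.klDiv μ ν : EReal)
      - ((ν.real Set.univ - μ.real Set.univ : ℝ) : EReal) := by
  by_cases h : μ ≪ ν ∧ Integrable (llr μ ν) μ
  · have h_nonneg := InformationTheory.integral_llr_add_sub_measure_univ_nonneg h.1 h.2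
    rw [klDiv, if_pos h, InformationTheory.klDiv_of_ac_of_integrable h.1 h.2,
      EReal.coe_ennreal_ofReal, max_eq_left h_nonneg, ← EReal.coe_sub]
    ring_nf
  · have h_top : InformationTheory.klDiv μ ν = ∞ :=
      not_not.mp (mt InformationTheory.klDiv_ne_top_iff.mp h)
    rw [klDiv, if_neg h, h_top, EReal.coe_ennreal_top, EReal.top_sub_coe]

lemma klDiv_eq_coe [IsProbabilityMeasure μ] [IsProbabilityMeasure ν] :
    klDiv μ ν = (InformationTheory.klDiv μ ν : EReal) := by
  simp [klDiv_eq_coe_sub_measureReal_univ]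

end ExtendedReal

section Kernel

variable {α β : Type*} [MeasurableSpace α] [MeasurableSpace β] [CountableOrCountablyGenerated α β]
  (μ : Measure α) [IsFiniteMeasure μ] (κ η : Kernel α β)

lemma measurable_ofReal_klFun_kernel_rnDeriv :
    Measurable fun p : α × β ↦ ENNReal.ofReal (klFun (κ.rnDeriv η p.1 p.2).toReal) :=
  (InformationTheory.measurable_klFun.comp
    (Kernel.measurable_rnDeriv κ η).ennreal_toReal).ennreal_ofReal

variable [IsFiniteKernel κ] [IsFiniteKernel η]

lemma rnDeriv_measure_compProd_right :
    (μ ⊗ₘ κ).rnDeriv (μ ⊗ₘ η) =ᵐ[μ ⊗ₘ η] fun p ↦ κ.rnDeriv η p.1 p.2 := by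
  have h_sing : μ ⊗ₘ κ.singularPart η ⟂ₘ μ ⊗ₘ η :=
    .compProd_of_right μ μ (ae_of_all μ (Kernel.mutuallySingular_singularPart κ η))
  have h_decomp : μ ⊗ₘ κ = μ ⊗ₘ κ.singularPart η
      + (μ ⊗ₘ η).withDensity (fun p ↦ κ.rnDeriv η p.1 p.2) := by
    rw [← Measure.compProd_withDensity (Kernel.measurable_rnDeriv κ η),
      ← Measure.compProd_add_right, add_comm, Kernel.rnDeriv_add_singularPart]
  exact (Measure.eq_rnDeriv (Kernel.measurable_rnDeriv κ η) h_sing h_decomp).symm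

lemma lintegral_klFun_rnDeriv_measure_compProd_right :
    ∫⁻ p, ENNReal.ofReal (klFun ((μ ⊗ₘ κ).rnDeriv (μ ⊗ₘ η) p).toReal) ∂(μ ⊗ₘ η)
      = ∫⁻ x, ∫⁻ y, ENNReal.ofReal (klFun (κ.rnDeriv η x y).toReal) ∂η x ∂μ := by
  rw [← Measure.lintegral_compProd (measurable_ofReal_klFun_kernel_rnDeriv κ η)]
  refine lintegral_congr_ae ?_
  filter_upwards [rnDeriv_measure_compProd_right μ κ η] with p hp
  rw [hp]

lemma klDiv_kernel_eq_lintegral_klFun (x : α) :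
    InformationTheory.klDiv (κ x) (η x) =
      if κ x ≪ η x then ∫⁻ y, ENNReal.ofReal (klFun (κ.rnDeriv η x y).toReal) ∂η x else ∞ := by
  rw [InformationTheory.klDiv_eq_lintegral_klFun]
  congr 1
  refine lintegral_congr_ae ?_
  filter_upwards [Kernel.rnDeriv_eq_rnDeriv_measure (κ := κ) (η := η) (a := x)] with y hy
  rw [hy]

lemma measurable_klDiv_kernel : Measurable fun x ↦ InformationTheory.klDiv (κ x) (η x) := by
  simp_rw [klDiv_kernel_eq_lintegral_klFun κ η]
  refine Measurable.ite (Kernel.measurableSet_absolutelyContinuous κ η) ?_ measurable_const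
  exact (measurable_ofReal_klFun_kernel_rnDeriv κ η).lintegral_kernel_prod_right'

theorem klDiv_compProd_right_eq_lintegral :
    InformationTheory.klDiv (μ ⊗ₘ κ) (μ ⊗ₘ η)
      = ∫⁻ x, InformationTheory.klDiv (κ x) (η x) ∂μ := by
  by_cases h_ac : ∀ᵐ x ∂μ, κ x ≪ η x
  · rw [InformationTheory.klDiv_eq_lintegral_klFun_of_ac
        (Measure.absolutelyContinuous_compProd_right_iff.mpr h_ac),
      lintegral_klFun_rnDeriv_measure_compProd_right]
    refine lintegral_congr_ae ?_
    filter_upwards [h_ac] with x hx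
    rw [klDiv_kernel_eq_lintegral_klFun, if_pos hx]
  · have h_not_ae_ne_top : ¬ ∀ᵐ x ∂μ, InformationTheory.klDiv (κ x) (η x) ≠ ∞ := fun h ↦
      h_ac (h.mono fun _ hx ↦ (InformationTheory.klDiv_ne_top_iff.mp hx).1)
    rw [InformationTheory.klDiv_of_not_ac
        (mt Measure.absolutelyContinuous_compProd_right_iff.mp h_ac),
      lintegral_eq_top_of_measure_eq_top_ne_zero (measurable_klDiv_kernel κ η).aemeasurable]
    simpa only [ae_iff, not_not] using h_not_ae_ne_top

end Kernel

theorem klDiv_prod_compProd_general {α β : Type*} [MeasurableSpace α] [MeasurableSpace β]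
    [CountableOrCountablyGenerated α β]
    (μ ν : Measure α) [IsFiniteMeasure μ] [IsFiniteMeasure ν]
    (κ η : Kernel α β) [IsMarkovKernel κ] [IsMarkovKernel η] :
    klDiv (μ ⊗ₘ κ) (ν ⊗ₘ η)
      = klDiv μ ν + ((∫⁻ x, erealToENNReal (klDiv (κ x) (η x)) ∂μ : ℝ≥0∞) : EReal) := by
  have h_mass (ρ : Measure α) [IsFiniteMeasure ρ] (ξ : Kernel α β) [IsMarkovKernel ξ] :
      (ρ ⊗ₘ ξ).real Set.univ = ρ.real Set.univ := by
    simp only [measureReal_def, Measure.compProd_apply_univ]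
  simp only [klDiv_eq_coe (κ _), erealToENNReal_coe]
  rw [klDiv_eq_coe_sub_measureReal_univ, klDiv_eq_coe_sub_measureReal_univ μ, h_mass, h_mass,
    InformationTheory.klDiv_compProd_eq_add, klDiv_compProd_right_eq_lintegral,
    EReal.coe_ennreal_add]
  simp only [sub_eq_add_neg, add_right_comm]

/-- KL divergence of an independent product measure from a composition-product measure:
for probability measures `μ₁, ν₁` on a standard Borel space `α`, a probability measure `μ₂`
on a standard Borel space `β` and a Markov kernel `η` from `α` to `β`,
`KL(μ₁ × μ₂ ‖ ν₁ ⊗ₘ η) = KL(μ₁ ‖ ν₁) + ∫ KL(μ₂ ‖ η x) ∂μ₁`, the sum and the integral being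
taken in the extended reals. -/
theorem klDiv_prod_compProd {α β : Type*} [MeasurableSpace α] [StandardBorelSpace α]
    [MeasurableSpace β] [StandardBorelSpace β]
    (μ₁ ν₁ : Measure α) [IsProbabilityMeasure μ₁] [IsProbabilityMeasure ν₁]
    (μ₂ : Measure β) [IsProbabilityMeasure μ₂]
    (η : Kernel α β) [IsMarkovKernel η] :
    klDiv (μ₁.prod μ₂) (ν₁ ⊗ₘ η)
      = klDiv μ₁ ν₁ + ((∫⁻ x, erealToENNReal (klDiv μ₂ (η x)) ∂μ₁ : ℝ≥0∞) : EReal) := by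
  simpa only [Measure.compProd_const, Kernel.const_apply] using
    klDiv_prod_compProd_general μ₁ ν₁ (Kernel.const α μ₂) η
end

section
/- Let K be a positive integer, let b, m : Fin K → ℝ, let s : Fin K → ℝ with s k ≥ 0 for all k, let m₀ ∈ ℝ, s₀ > 0, and f > 0. Let U be the product measure ⊗_k N(m k, s k) on Fin K → ℝ. Then the expected conditional Gaussian KL divergence has the closed form ∫ KL( N(m₀, s₀) ‖ N(∑_k b k * u k, f) ) dU(u) = ½ · ( log f − log s₀ − 1 + (1/f) · ( s₀ + ∑_k (b k)² * s k + (m₀ − ∑_k b k * m k)² ) ). -/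
open Classical MeasureTheory ProbabilityTheory
open scoped NNReal

/-!
For nondegenerate Gaussians the log-likelihood ratio is the difference of the two log-densities, a
quadratic polynomial, so `KL(N(a, v) ‖ N(c, w))` is a constant plus `(a - c)² / (2w)`. When `c` is
replaced by a square-integrable random variable `X`, the only random term left is `(X - a)²`, and
its expectation is `Var[X] + (E[X] - a)²`. For `X = ∑ k, b k * u k` with independent `u k`, means
add linearly and variances add with weights `(b k)²`.
-/

section Moments

theorem integral_sub_const_sq {Ω : Type*} {mΩ : MeasurableSpace Ω} {P : Measure Ω}
    [IsProbabilityMeasure P] {X : Ω → ℝ} (hX : MemLp X 2 P) (c : ℝ) :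
    ∫ ω, (X ω - c) ^ 2 ∂P = Var[X; P] + (∫ ω, X ω ∂P - c) ^ 2 := by
  have variance_eq : Var[X; P] = ∫ ω, (X ω - c) ^ 2 ∂P - (∫ ω, (X ω - c) ∂P) ^ 2 := by
    rw [← variance_sub_const hX.aestronglyMeasurable c]
    exact variance_eq_sub (hX.sub (memLp_const c))
  have mean_eq : ∫ ω, (X ω - c) ∂P = ∫ ω, X ω ∂P - c := by
    simp [integral_sub (hX.integrable one_le_two) (integrable_const c)]
  rw [variance_eq, mean_eq, sub_add_cancel]

variable {ι : Type*} [Fintype ι] {Ω : ι → Type*} {mΩ : ∀ i, MeasurableSpace (Ω i)}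
  {μ : ∀ i, Measure (Ω i)} [∀ i, IsProbabilityMeasure (μ i)]
  {E : Type*} [NormedAddCommGroup E] {X : ∀ i, Ω i → E}

theorem memLp_sum_eval_pi {p : ENNReal} (hX : ∀ i, MemLp (X i) p (μ i)) :
    MemLp (fun ω => ∑ i, X i (ω i)) p (Measure.pi μ) :=
  memLp_finsetSum _ fun i _ => (hX i).comp_measurePreserving (measurePreserving_eval μ i)

theorem integral_sum_eval_pi [NormedSpace ℝ E] (hX : ∀ i, Integrable (X i) (μ i)) :
    ∫ ω, ∑ i, X i (ω i) ∂Measure.pi μ = ∑ i, ∫ x, X i x ∂μ i := by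
  rw [integral_finsetSum _ fun i _ => integrable_comp_eval (hX i)]
  exact Finset.sum_congr rfl fun i _ => integral_comp_eval (hX i).aestronglyMeasurable

end Moments

theorem llr_ae_eq_llr_sub_llr {α : Type*} {mα : MeasurableSpace α} {μ ν κ : Measure α}
    [SigmaFinite μ] [SigmaFinite ν] [SigmaFinite κ] (hμν : μ ≪ ν) (hνκ : ν ≪ κ) :
    llr μ ν =ᵐ[μ] fun x => llr μ κ x - llr ν κ x := by
  filter_upwards [hμν (Measure.rnDeriv_mul_rnDeriv' (μ := μ) hνκ), Measure.rnDeriv_pos hμν,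
    hμν (Measure.rnDeriv_lt_top μ ν), hμν (Measure.rnDeriv_pos hνκ),
    hμν (hνκ (Measure.rnDeriv_lt_top ν κ))] with x chain_rule hμν_pos hμν_lt hνκ_pos hνκ_lt
  have hμν_ne := (ENNReal.toReal_pos hμν_pos.ne' hμν_lt.ne).ne'
  have hνκ_ne := (ENNReal.toReal_pos hνκ_pos.ne' hνκ_lt.ne).ne'
  simp only [llr, ← chain_rule, Pi.mul_apply, ENNReal.toReal_mul]
  rw [Real.log_mul hμν_ne hνκ_ne, add_sub_cancel_right]

theorem klDiv_of_ac_of_integrable {α : Type*} [MeasurableSpace α] {μ ν : Measure α}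
    (hμν : μ ≪ ν) (hint : Integrable (llr μ ν) μ) :
    klDiv μ ν = ((∫ x, llr μ ν x ∂μ : ℝ) : EReal) :=
  if_pos ⟨hμν, hint⟩

section Gaussian

variable (a c : ℝ) {v w : ℝ≥0}

theorem log_gaussianPDFReal (hv : v ≠ 0) (x : ℝ) :
    Real.log (gaussianPDFReal a v x) =
      -(Real.log (2 * Real.pi) + Real.log v) / 2 - (x - a) ^ 2 / (2 * v) := by
  rw [gaussianPDFReal, Real.log_mul (by positivity) (by positivity), Real.log_exp, Real.log_inv,
    Real.log_sqrt (by positivity), Real.log_mul (by positivity) (by positivity)]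
  ring

theorem llr_gaussianReal_volume (v : ℝ≥0) :
    llr (gaussianReal a v) volume =ᵐ[volume] fun x => Real.log (gaussianPDFReal a v x) := by
  filter_upwards [rnDeriv_gaussianReal a v] with x hx
  rw [llr, hx, toReal_gaussianPDF]

theorem gaussianReal_absolutelyContinuous_gaussianReal (hv : v ≠ 0) (hw : w ≠ 0) :
    gaussianReal a v ≪ gaussianReal c w :=
  (gaussianReal_absolutelyContinuous a hv).trans (gaussianReal_absolutelyContinuous' c hw)

theorem llr_gaussianReal (hv : v ≠ 0) (hw : w ≠ 0) :
    llr (gaussianReal a v) (gaussianReal c w) =ᵐ[gaussianReal a v] fun x =>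
      (Real.log w - Real.log v) / 2 - (x - a) ^ 2 / (2 * v) + (x - c) ^ 2 / (2 * w) := by
  have ac_volume := gaussianReal_absolutelyContinuous a hv
  filter_upwards [llr_ae_eq_llr_sub_llr (gaussianReal_absolutelyContinuous_gaussianReal a c hv hw)
      (gaussianReal_absolutelyContinuous c hw),
    ac_volume (llr_gaussianReal_volume a v), ac_volume (llr_gaussianReal_volume c w)]
    with x llr_eq llr_left llr_right
  rw [llr_eq, llr_left, llr_right, log_gaussianPDFReal a hv, log_gaussianPDFReal c hw]
  ring

theorem integral_sub_const_sq_gaussianReal (v : ℝ≥0) :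
    ∫ x, (x - c) ^ 2 ∂gaussianReal a v = v + (a - c) ^ 2 := by
  simpa [variance_id_gaussianReal] using
    integral_sub_const_sq (memLp_id_gaussianReal (μ := a) (v := v) 2) c

theorem integrable_sub_const_sq_div_gaussianReal (v : ℝ≥0) (d : ℝ) :
    Integrable (fun x => (x - c) ^ 2 / d) (gaussianReal a v) :=
  ((memLp_id_gaussianReal 2).sub (memLp_const c)).integrable_sq.div_const d

theorem integrable_llr_gaussianReal (hv : v ≠ 0) (hw : w ≠ 0) :
    Integrable (llr (gaussianReal a v) (gaussianReal c w)) (gaussianReal a v) :=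
  (((integrable_const _).sub (integrable_sub_const_sq_div_gaussianReal a a v _)).add
    (integrable_sub_const_sq_div_gaussianReal a c v _)).congr (llr_gaussianReal a c hv hw).symm

theorem integral_llr_gaussianReal (hv : v ≠ 0) (hw : w ≠ 0) :
    ∫ x, llr (gaussianReal a v) (gaussianReal c w) x ∂gaussianReal a v =
      1 / 2 * (Real.log w - Real.log v - 1 + 1 / w * (v + (a - c) ^ 2)) := by
  have hv_ne : (v : ℝ) ≠ 0 := NNReal.coe_ne_zero.mpr hv
  have integrable_sq_div (y d : ℝ) := integrable_sub_const_sq_div_gaussianReal a y v d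
  have integrable_const_sub_sq_div : Integrable
      (fun x => (Real.log w - Real.log v) / 2 - (x - a) ^ 2 / (2 * v)) (gaussianReal a v) :=
    (integrable_const _).sub (integrable_sq_div a _)
  calc ∫ x, llr (gaussianReal a v) (gaussianReal c w) x ∂gaussianReal a v
    _ = ∫ x, ((Real.log w - Real.log v) / 2 - (x - a) ^ 2 / (2 * v) + (x - c) ^ 2 / (2 * w))
          ∂gaussianReal a v := integral_congr_ae (llr_gaussianReal a c hv hw)
    _ = (Real.log w - Real.log v) / 2 - (∫ x, (x - a) ^ 2 ∂gaussianReal a v) / (2 * v)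
          + (∫ x, (x - c) ^ 2 ∂gaussianReal a v) / (2 * w) := by
      rw [integral_add integrable_const_sub_sq_div (integrable_sq_div c _),
        integral_sub (integrable_const _) (integrable_sq_div a _), integral_const, probReal_univ,
        one_smul, integral_div, integral_div]
    _ = 1 / 2 * (Real.log w - Real.log v - 1 + 1 / w * (v + (a - c) ^ 2)) := by
      rw [integral_sub_const_sq_gaussianReal, integral_sub_const_sq_gaussianReal]
      field_simp
      ring

theorem klDiv_gaussianReal (hv : v ≠ 0) (hw : w ≠ 0) :
    klDiv (gaussianReal a v) (gaussianReal c w) =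
      ((1 / 2 * (Real.log w - Real.log v - 1 + 1 / w * (v + (a - c) ^ 2)) : ℝ) : EReal) := by
  rw [klDiv_of_ac_of_integrable (gaussianReal_absolutelyContinuous_gaussianReal a c hv hw)
    (integrable_llr_gaussianReal a c hv hw), integral_llr_gaussianReal a c hv hw]

theorem integral_klDiv_gaussianReal_of_memLp {Ω : Type*} {mΩ : MeasurableSpace Ω} {P : Measure Ω}
    [IsProbabilityMeasure P] {X : Ω → ℝ} (hX : MemLp X 2 P) (hv : v ≠ 0) (hw : w ≠ 0) :
    ∫ ω, (klDiv (gaussianReal a v) (gaussianReal (X ω) w)).toReal ∂P =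
      1 / 2 * (Real.log w - Real.log v - 1
        + 1 / w * (v + Var[X; P] + (a - ∫ ω, X ω ∂P) ^ 2)) := by
  have toReal_klDiv (ω : Ω) : (klDiv (gaussianReal a v) (gaussianReal (X ω) w)).toReal =
      1 / 2 * (Real.log w - Real.log v - 1 + 1 / w * v) + 1 / (2 * w) * (X ω - a) ^ 2 := by
    rw [klDiv_gaussianReal a _ hv hw, EReal.toReal_coe]
    ring
  have integrable_sq : Integrable (fun ω => (X ω - a) ^ 2) P :=
    (hX.sub (memLp_const a)).integrable_sq
  simp only [toReal_klDiv]
  rw [integral_add (integrable_const _) (integrable_sq.const_mul _), integral_const,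
    probReal_univ, one_smul, integral_const_mul, integral_sub_const_sq hX]
  ring

end Gaussian

theorem integral_klDiv_gaussianReal_pi_general {ι : Type*} [Fintype ι] {μ : ι → Measure ℝ}
    [∀ k, IsProbabilityMeasure (μ k)] (hμ : ∀ k, MemLp id 2 (μ k)) (b : ι → ℝ) (m₀ : ℝ)
    {s₀ f : ℝ≥0} (hs₀ : s₀ ≠ 0) (hf : f ≠ 0) :
    ∫ u : ι → ℝ, (klDiv (gaussianReal m₀ s₀) (gaussianReal (∑ k, b k * u k) f)).toReal
        ∂(Measure.pi μ) =
      1 / 2 * (Real.log f - Real.log s₀ - 1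
        + 1 / f * (s₀ + ∑ k, b k ^ 2 * Var[id; μ k] + (m₀ - ∑ k, b k * ∫ x, x ∂μ k) ^ 2)) := by
  have hb (k : ι) : MemLp (fun x => b k * x) 2 (μ k) := (hμ k).const_mul (b k)
  have mean_eq : ∫ u : ι → ℝ, ∑ k, b k * u k ∂Measure.pi μ = ∑ k, b k * ∫ x, x ∂μ k := by
    rw [integral_sum_eval_pi fun k => (hb k).integrable one_le_two]
    exact Finset.sum_congr rfl fun k _ => integral_const_mul (b k) _
  have variance_eq :
      Var[fun u : ι → ℝ => ∑ k, b k * u k; Measure.pi μ] = ∑ k, b k ^ 2 * Var[id; μ k] := by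
    rw [← Finset.sum_fn, variance_sum_pi hb]
    exact Finset.sum_congr rfl fun k _ => variance_const_mul (b k) id (μ k)
  rw [integral_klDiv_gaussianReal_of_memLp m₀ (memLp_sum_eval_pi hb) hs₀ hf, mean_eq, variance_eq]

/-- Closed form of the expected conditional Gaussian KL divergence: if
`u k ~ N(m k, s k)` independently, then
`E[KL(N(m₀, s₀) ‖ N(∑ₖ bₖ uₖ, f))]
  = ½ (log f − log s₀ − 1 + (1/f)(s₀ + ∑ₖ bₖ² sₖ + (m₀ − ∑ₖ bₖ mₖ)²))`. -/
theorem integral_klDiv_gaussianReal_pi (K : ℕ) (hK : 0 < K)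
    (b m : Fin K → ℝ) (s : Fin K → ℝ≥0) (m₀ : ℝ) (s₀ f : ℝ≥0)
    (hs₀ : 0 < s₀) (hf : 0 < f) :
    ∫ u : Fin K → ℝ,
        (klDiv (gaussianReal m₀ s₀) (gaussianReal (∑ k, b k * u k) f)).toReal
        ∂(Measure.pi fun k => gaussianReal (m k) (s k))
      = 1 / 2 * (Real.log (f : ℝ) - Real.log (s₀ : ℝ) - 1
          + (1 / (f : ℝ)) * ((s₀ : ℝ) + ∑ k, (b k) ^ 2 * (s k : ℝ)
            + (m₀ - ∑ k, b k * m k) ^ 2)) := by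
  simpa [variance_id_gaussianReal] using integral_klDiv_gaussianReal_pi_general
    (fun k => memLp_id_gaussianReal (μ := m k) (v := s k) 2) b m₀ hs₀.ne' hf.ne'
end
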